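/- Let T(λ) be the transfer matrix of the trigonometric 6-vertex reflection algebra associated to an arbitrary couple of boundary matrices K₋(λ), K₊(λ). Then the 2^N covectors ⟨h₁,…,h_N| := ⟨S| ∏_{n=1}^N ( T(ξ_n − η/2) / A(η/2 − ξ_n) )^{1−h_n}, indexed by (h₁,…,h_N) ∈ {0,1}^N, form a basis of H* for almost any choice of the covector ⟨S| ∈ H*, of the inhomogeneities satisfying the inhomogeneity condition modulo iπ, of the parameter η, and of the boundary parameters — i.e., outside the zero locus of some nonzero Laurent-polynomial function of e^{2η}, e^{2ξ_n}, e^{2ζ±}, κ±, e^{2τ±} and the components of ⟨S|. -/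

import Mathlib

/-!
Why the covectors form a basis for generic parameters.

At `λ = ξ_n - η/2` the factor of the bulk monodromy matrix acting on site `n` is
`R(-η) = sinh η • (P - 1)`, with `P` the permutation. Hence
`T(ξ_n - η/2) = sinh η / (sinh ζ₊ sinh ζ₋) • Tt n`, where `Tt n` is regular at `η = 0` (`T_eq`).
At `η = 0` all the other `R`-matrices become scalars, so `Tt n` is a nonzero multiple of a one-site
operator `Bmat` acting on site `n` (`Tt_zero`). If its entry `(0, 1)` is nonzero for every `n`, the
covectors built from `⟨0,…,0|` are a tensor product of bases of `(ℂ²)*` (`det_kron_ne`), and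
`ξ_n = n` (for sites numbered from `1`), `κ₋ = 1`, with all other parameters zero, is such a point
(`covP_point`).

The determinant of the covectors built from `Tt` is a Laurent polynomial in `e^ξ, e^η, e^ζ, e^τ` and
a polynomial in `κ` and `S` (`QPM.covP`), so it is nonzero generically. The same holds for the
conditions under which the rescaling from `T / A` to `Tt` is invertible; in particular a zero of `A`
coming from `g±` forces a relation between `ζ, κ, ξ` that does not involve `α, β` (`gfun_ne`).
Passing from polynomials in `e^v` to polynomials in `e^{2v}` uses that `ℂ[x]` is integral over
`ℂ[x²]`: every nonzero polynomial in `x` divides a nonzero polynomial in `x²`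
(`exists_sq_multiple`).
-/

/-!
Trigonometric 6-vertex (U_q(ĝl₂)) reflection algebra setup.
-/

noncomputable section
open Matrix Complex BigOperators

namespace SoVT

abbrev Chain (N : ℕ) := Fin N → Fin 2
abbrev HSp (N : ℕ) := Chain N → ℂ
abbrev Op (N : ℕ) := Matrix (Chain N) (Chain N) ℂ
abbrev AOp (N : ℕ) := Matrix (Fin 2 × Chain N) (Fin 2 × Chain N) ℂ

/-- the trigonometric 6-vertex R-matrix -/
def Rmat (η lam : ℂ) : Matrix (Fin 2 × Fin 2) (Fin 2 × Fin 2) ℂ :=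
  Matrix.of fun p q =>
    if p = q then (if p.1 = p.2 then Complex.sinh (lam + η) else Complex.sinh lam)
    else if p.1 = q.2 ∧ p.2 = q.1 then Complex.sinh η else 0

/-- the R-matrix acting on the auxiliary space and site m of the chain -/
def Rsite (N : ℕ) (η : ℂ) (m : Fin N) (lam : ℂ) : AOp N :=
  Matrix.of fun p q =>
    Rmat η lam (p.1, p.2 m) (q.1, q.2 m) *
      ∏ k ∈ Finset.univ.erase m, (if p.2 k = q.2 k then (1 : ℂ) else 0)

/-- bulk monodromy matrix M₀(λ) = R₀N(λ − ξN^{(0)}) ⋯ R₀1(λ − ξ₁^{(0)}), ξ^{(0)} = ξ + η/2 -/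
def mono (N : ℕ) (η : ℂ) (ξ : Fin N → ℂ) (lam : ℂ) : AOp N :=
  (((List.finRange N).reverse).map fun m => Rsite N η m (lam - (ξ m + η / 2))).prod

def sigY : Matrix (Fin 2) (Fin 2) ℂ := !![0, -Complex.I; Complex.I, 0]

/-- embed a 2×2 matrix as acting on the auxiliary space -/
def auxEmb (N : ℕ) (K : Matrix (Fin 2) (Fin 2) ℂ) : AOp N :=
  Matrix.of fun p q => K p.1 q.1 * (if p.2 = q.2 then (1 : ℂ) else 0)

/-- transposition on the auxiliary space only -/
def t0 (N : ℕ) (M : AOp N) : AOp N := Matrix.of fun p q => M (q.1, p.2) (p.1, q.2)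

/-- M̂₀(λ) = (−1)^N σ₀^y M₀(−λ)^{t₀} σ₀^y -/
def monoHat (N : ℕ) (η : ℂ) (ξ : Fin N → ℂ) (lam : ℂ) : AOp N :=
  ((-1 : ℂ) ^ N) • (auxEmb N sigY * t0 N (mono N η ξ (-lam)) * auxEmb N sigY)

/-- the trigonometric boundary K-matrix K₋(λ; ζ, κ, τ); K₊(λ) = K₋(λ+η; ζ₊, κ₊, τ₊) -/
def Kmat (η ζ κ τ lam : ℂ) : Matrix (Fin 2) (Fin 2) ℂ :=
  (Complex.sinh ζ)⁻¹ •
    !![Complex.sinh (lam - η / 2 + ζ), κ * Complex.exp τ * Complex.sinh (2 * lam - η);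
       κ * Complex.exp (-τ) * Complex.sinh (2 * lam - η), Complex.sinh (ζ - lam + η / 2)]

/-- partial trace over the auxiliary space -/
def ptr (N : ℕ) (M : AOp N) : Op N := Matrix.of fun x y => ∑ a : Fin 2, M (a, x) (a, y)

/-- the transfer matrix T(λ) = tr₀[K₊(λ) M₀(λ) K₋(λ) M̂₀(λ)] -/
def T (N : ℕ) (η : ℂ) (ξ : Fin N → ℂ) (ζm κm τm ζp κp τp lam : ℂ) : Op N :=
  ptr N (auxEmb N (Kmat η ζp κp τp (lam + η)) * mono N η ξ lam *
    auxEmb N (Kmat η ζm κm τm lam) * monoHat N η ξ lam)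

def aPol (N : ℕ) (η : ℂ) (ξ : Fin N → ℂ) (lam : ℂ) : ℂ :=
  ∏ n, Complex.sinh (lam - ξ n + η / 2)
def dPol (N : ℕ) (η : ℂ) (ξ : Fin N → ℂ) (lam : ℂ) : ℂ := aPol N η ξ (lam - η)

/-- the functions g±(λ); sgn = +1 for g₊ (with cosh(λ−β₊−η/2)), sgn = −1 for g₋ -/
def gfun (η ζ κ τ α β sgn lam : ℂ) : ℂ :=
  if κ = 0 then Complex.sinh (lam + ζ - η / 2) / Complex.sinh ζ
  else Complex.sinh (lam + α - η / 2) * Complex.cosh (lam - sgn * β - η / 2) /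
    (Complex.sinh α * Complex.cosh β)

/-- A_{α±,β±}(λ) = (−1)^N (sinh(2λ+η)/sinh 2λ) g₊(λ) g₋(λ) a(λ) d(−λ) -/
def Afun (N : ℕ) (η : ℂ) (ξ : Fin N → ℂ) (ζm κm τm ζp κp τp αm βm αp βp lam : ℂ) : ℂ :=
  (-1 : ℂ) ^ N * (Complex.sinh (2 * lam + η) / Complex.sinh (2 * lam)) *
    gfun η ζp κp τp αp βp 1 lam * gfun η ζm κm τm αm βm (-1) lam *
    aPol N η ξ lam * dPol N η ξ (-lam)

/-- the constraints defining the parameters α±, β± when κ± ≠ 0 -/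
def abConstraint (ζ κ α β : ℂ) : Prop :=
  Complex.sinh α * Complex.cosh β = Complex.sinh ζ / (2 * κ) ∧
  Complex.cosh α * Complex.sinh β = Complex.cosh ζ / (2 * κ)

/-- the inhomogeneity condition modulo iπ -/
def inhomogT (N : ℕ) (η : ℂ) (ξ : Fin N → ℂ) : Prop :=
  ∀ a b : Fin N, a ≠ b → ∀ ε : ℤ, ε = -1 ∨ ε = 0 ∨ ε = 1 → ∀ k : ℤ,
    ξ a ≠ ξ b + (ε : ℂ) * η + (k : ℂ) * (Real.pi : ℂ) * Complex.I

/-- SoV covector ⟨h₁,…,h_N| = ⟨S| ∏ₙ (T(ξₙ−η/2)/A(η/2−ξₙ))^{1−hₙ} -/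
def sovCov (N : ℕ) (η : ℂ) (ξ : Fin N → ℂ) (ζm κm τm ζp κp τp αm βm αp βp : ℂ)
    (S : HSp N) (h : Chain N) : HSp N :=
  Matrix.vecMul S
    (((List.finRange N).map fun n =>
        ((Afun N η ξ ζm κm τm ζp κp τp αm βm αp βp (η / 2 - ξ n))⁻¹ •
          T N η ξ ζm κm τm ζp κp τp (ξ n - η / 2)) ^ (1 - (h n : ℕ))).prod)


/-! ### Laurent polynomials in the exponentiated parameters -/

/-- Labels of the parameters: components of `S`, inhomogeneities, and
`η, ζ₊, ζ₋, κ₊, κ₋, τ₊, τ₋` in this order. -/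
abbrev Idx (N : ℕ) := (Chain N) ⊕ (Fin N) ⊕ (Fin 7)

/-- Parameters that enter through their exponential: all but the components of `S`
and `κ₊`, `κ₋`. -/
def isExp (N : ℕ) : Idx N → Prop
  | Sum.inl _ => False
  | Sum.inr (Sum.inl _) => True
  | Sum.inr (Sum.inr i) => i ≠ 3 ∧ i ≠ 4

instance (N : ℕ) : DecidablePred (isExp N) := Classical.decPred _

/-- The point at which polynomials are evaluated: `exp v` for the exponential parameters `v`,
and `v` itself for the others. -/
def yv (N : ℕ) (p : Idx N → ℂ) (i : Idx N) : ℂ := if isExp N i then Complex.exp (p i) else p i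

/-- The product of all the exponentials, the common denominator of Laurent polynomials. -/
def mden (N : ℕ) (p : Idx N → ℂ) : ℂ :=
  ∏ i ∈ Finset.univ.filter (isExp N), Complex.exp (p i)

lemma mden_ne (N : ℕ) (p : Idx N → ℂ) : mden N p ≠ 0 :=
  Finset.prod_ne_zero_iff.2 fun _ _ => Complex.exp_ne_zero _

lemma mden_eval (N : ℕ) (p : Idx N → ℂ) :
    MvPolynomial.eval (yv N p) (∏ i ∈ Finset.univ.filter (isExp N), MvPolynomial.X i) =
      mden N p := by
  rw [map_prod, mden]
  refine Finset.prod_congr rfl fun i hi => ?_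
  simp only [Finset.mem_filter] at hi
  simp [yv, hi.2]

/-- Functions of the parameters that are Laurent polynomials in the exponentials and polynomials
in the other parameters. -/
def QP (N : ℕ) : Subalgebra ℂ ((Idx N → ℂ) → ℂ) where
  carrier := {f | ∃ (k : ℕ) (P : MvPolynomial (Idx N) ℂ),
    ∀ p, f p * mden N p ^ k = MvPolynomial.eval (yv N p) P}
  mul_mem' := by
    rintro f g ⟨k, P, hP⟩ ⟨l, Q, hQ⟩
    refine ⟨k + l, P * Q, fun p => ?_⟩
    rw [map_mul, ← hP, ← hQ, Pi.mul_apply, pow_add]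
    ring
  add_mem' := by
    rintro f g ⟨k, P, hP⟩ ⟨l, Q, hQ⟩
    refine ⟨k + l, P * (∏ i ∈ Finset.univ.filter (isExp N), MvPolynomial.X i) ^ l +
      Q * (∏ i ∈ Finset.univ.filter (isExp N), MvPolynomial.X i) ^ k, fun p => ?_⟩
    rw [map_add, map_mul, map_mul, map_pow, map_pow, mden_eval, ← hP, ← hQ, Pi.add_apply, pow_add]
    ring
  algebraMap_mem' := fun c => ⟨0, MvPolynomial.C c, fun p => by simp⟩

lemma coord_mem (N : ℕ) (i : Idx N) (hi : ¬ isExp N i) : (fun p => p i) ∈ QP N :=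
  ⟨0, MvPolynomial.X i, fun p => by simp [yv, hi]⟩

/-- Functions `ℓ` (in practice integral linear forms) whose exponentials `exp (±ℓ)` are Laurent polynomials. -/
def ELin (N : ℕ) (l : (Idx N → ℂ) → ℂ) : Prop :=
  (fun p => Complex.exp (l p)) ∈ QP N ∧ (fun p => Complex.exp (-l p)) ∈ QP N

lemma ELin.coord (N : ℕ) (i : Idx N) (hi : isExp N i) : ELin N (fun p => p i) := by
  refine ⟨⟨0, MvPolynomial.X i, fun p => by simp [yv, hi]⟩,
    ⟨1, ∏ j ∈ (Finset.univ.filter (isExp N)).erase i, MvPolynomial.X j, fun p => ?_⟩⟩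
  have hm : i ∈ Finset.univ.filter (isExp N) := by simp [hi]
  rw [pow_one, mden, ← Finset.mul_prod_erase _ _ hm, ← mul_assoc, ← Complex.exp_add,
    neg_add_cancel, Complex.exp_zero, one_mul, map_prod]
  refine Finset.prod_congr rfl fun j hj => ?_
  simp only [Finset.mem_erase, Finset.mem_filter] at hj
  simp [yv, hj.2.2]

lemma ELin.add {N : ℕ} {l l' : (Idx N → ℂ) → ℂ} (h : ELin N l) (h' : ELin N l') :
    ELin N (fun p => l p + l' p) := by
  refine ⟨?_, ?_⟩
  · simp only [Complex.exp_add]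
    exact (QP N).mul_mem h.1 h'.1
  · simp only [neg_add, Complex.exp_add]
    exact (QP N).mul_mem h.2 h'.2

lemma ELin.neg {N : ℕ} {l : (Idx N → ℂ) → ℂ} (h : ELin N l) : ELin N (fun p => -l p) :=
  ⟨h.2, by simpa only [neg_neg] using h.1⟩

lemma ELin.sub {N : ℕ} {l l' : (Idx N → ℂ) → ℂ} (h : ELin N l) (h' : ELin N l') :
    ELin N (fun p => l p - l' p) := by
  simpa only [sub_eq_add_neg] using h.add h'.neg

lemma ELin.two {N : ℕ} {l : (Idx N → ℂ) → ℂ} (h : ELin N l) : ELin N (fun p => 2 * l p) := by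
  simpa only [two_mul] using h.add h

lemma const_mem (N : ℕ) (c : ℂ) : (fun _ : Idx N → ℂ => c) ∈ QP N := (QP N).algebraMap_mem c

lemma ELin.sinh_mem {N : ℕ} {l : (Idx N → ℂ) → ℂ} (h : ELin N l) :
    (fun p => Complex.sinh (l p)) ∈ QP N := by
  have := (QP N).mul_mem ((QP N).sub_mem h.1 h.2) (const_mem N (1 / 2))
  convert this using 1
  ext p
  simp [Complex.sinh]
  ring

lemma ELin.cosh_mem {N : ℕ} {l : (Idx N → ℂ) → ℂ} (h : ELin N l) :
    (fun p => Complex.cosh (l p)) ∈ QP N := by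
  have := (QP N).mul_mem ((QP N).add_mem h.1 h.2) (const_mem N (1 / 2))
  convert this using 1
  ext p
  simp [Complex.cosh]
  ring

/-- Exponents turning `yv` into the evaluation point of the theorem, where the exponential
parameters `v` appear as `exp (2 v)`. -/
def sqExp (N : ℕ) (i : Idx N) : ℕ := if isExp N i then 2 else 1

/-- `ℂ[X]` is integral over the subring generated by the powers `X i ^ sqExp i`, so every nonzero
polynomial divides a nonzero polynomial in these powers. -/
lemma exists_sq_multiple (N : ℕ) (P : MvPolynomial (Idx N) ℂ) (hP : P ≠ 0) :
    ∃ Q : MvPolynomial (Idx N) ℂ, Q ≠ 0 ∧ ∀ y : Idx N → ℂ,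
      MvPolynomial.eval (fun i => y i ^ sqExp N i) Q ≠ 0 → MvPolynomial.eval y P ≠ 0 := by
  let φ : MvPolynomial (Idx N) ℂ →ₐ[ℂ] MvPolynomial (Idx N) ℂ :=
    MvPolynomial.aeval (fun i => MvPolynomial.X i ^ sqExp N i)
  have hintegral : ∀ F : MvPolynomial (Idx N) ℂ, IsIntegral φ.range F := by
    intro F
    induction F using MvPolynomial.induction_on with
    | C a =>
      have : (MvPolynomial.C a : MvPolynomial (Idx N) ℂ) =
        algebraMap φ.range _ (algebraMap ℂ φ.range a) := rfl
      rw [this]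
      exact isIntegral_algebraMap
    | add p q hp hq => exact hp.add hq
    | mul_X p i hp =>
      refine hp.mul (IsIntegral.of_pow (n := sqExp N i) (by unfold sqExp; split_ifs <;> norm_num) ?_)
      have : (MvPolynomial.X i ^ sqExp N i : MvPolynomial (Idx N) ℂ) =
        algebraMap φ.range _ ⟨φ (MvPolynomial.X i), ⟨_, rfl⟩⟩ := by
        change _ = φ (MvPolynomial.X i)
        simp [φ]
      rw [this]
      exact isIntegral_algebraMap
  have hne := Ideal.comap_ne_bot_of_integral_mem (I := Ideal.span {P}) hP
    (Ideal.mem_span_singleton_self P) (hintegral P)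
  obtain ⟨⟨a, Q, rfl⟩, ha, ha0⟩ := Submodule.exists_mem_ne_zero_of_ne_bot hne
  refine ⟨Q, ?_, fun y hy h0 => hy ?_⟩
  · rintro rfl
    exact ha0 (Subtype.ext (map_zero φ))
  · rw [Ideal.mem_comap, Ideal.mem_span_singleton] at ha
    obtain ⟨R, hR⟩ := ha
    change φ Q = P * R at hR
    have h1 : MvPolynomial.eval y (φ Q) = MvPolynomial.eval (fun i => y i ^ sqExp N i) Q := by
      have : (MvPolynomial.aeval y : MvPolynomial (Idx N) ℂ →ₐ[ℂ] ℂ).comp φ =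
          MvPolynomial.aeval (fun i => y i ^ sqExp N i) := by
        ext i
        simp [φ]
      have h2 := DFunLike.congr_fun this Q
      simpa [MvPolynomial.aeval_eq_eval] using h2
    rw [← h1, hR, map_mul, h0, zero_mul]

/-- Two Laurent polynomials, neither of them identically zero, are both nonzero outside the zero
locus of one nonzero polynomial in the variables of the theorem. -/
lemma generic_of_QP (N : ℕ) {f g : (Idx N → ℂ) → ℂ} (hf : f ∈ QP N) (hg : g ∈ QP N)
    (hf0 : ∃ p, f p ≠ 0) (hg0 : ∃ p, g p ≠ 0) :
    ∃ Q : MvPolynomial (Idx N) ℂ, Q ≠ 0 ∧ ∀ p : Idx N → ℂ,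
      MvPolynomial.eval (fun i => yv N p i ^ sqExp N i) Q ≠ 0 → f p ≠ 0 ∧ g p ≠ 0 := by
  obtain ⟨k, P, hP⟩ := hf
  obtain ⟨l, R, hR⟩ := hg
  obtain ⟨p, hp⟩ := hf0
  obtain ⟨r, hr⟩ := hg0
  have hP0 : P ≠ 0 := by
    rintro rfl
    have := hP p
    simp [hp, mden_ne] at this
  have hR0 : R ≠ 0 := by
    rintro rfl
    have := hR r
    simp [hr, mden_ne] at this
  obtain ⟨Q, hQ, h⟩ := exists_sq_multiple N (P * R) (mul_ne_zero hP0 hR0)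
  refine ⟨Q, hQ, fun q hq => ?_⟩
  have := h _ hq
  rw [map_mul, ← hP, ← hR] at this
  exact ⟨left_ne_zero_of_mul (left_ne_zero_of_mul this),
    left_ne_zero_of_mul (right_ne_zero_of_mul this)⟩

/-! ### Matrices of Laurent polynomials -/

/-- Matrix-valued functions with entries in `QP`. -/
def QPM (N : ℕ) {ι : Type} (M : (Idx N → ℂ) → Matrix ι ι ℂ) : Prop :=
  ∀ i j, (fun p => M p i j) ∈ QP N

lemma QPM.mul {N : ℕ} {ι : Type} [Fintype ι] {A B : (Idx N → ℂ) → Matrix ι ι ℂ}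
    (hA : QPM N A) (hB : QPM N B) : QPM N (fun p => A p * B p) := by
  intro i j
  have : (fun p => (A p * B p) i j) = ∑ k, (fun p => A p i k) * (fun p => B p k j) := by
    ext p
    simp [Matrix.mul_apply]
  rw [this]
  exact (QP N).sum_mem fun k _ => (QP N).mul_mem (hA i k) (hB k j)

lemma QPM.const {N : ℕ} {ι : Type} (A : Matrix ι ι ℂ) : QPM N (fun _ => A) :=
  fun i j => const_mem N (A i j)

lemma QPM.pow {N : ℕ} {ι : Type} [Fintype ι] [DecidableEq ι]
    {A : (Idx N → ℂ) → Matrix ι ι ℂ} (hA : QPM N A) (k : ℕ) : QPM N (fun p => A p ^ k) := by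
  induction k with
  | zero => simpa only [pow_zero] using QPM.const 1
  | succ k ih => simpa only [pow_succ] using ih.mul hA

lemma QPM.list_prod {N : ℕ} {ι κ : Type} [Fintype ι] [DecidableEq ι]
    {A : κ → (Idx N → ℂ) → Matrix ι ι ℂ} (hA : ∀ m, QPM N (A m)) (l : List κ) :
    QPM N (fun p => (l.map fun m => A m p).prod) := by
  induction l with
  | nil => simpa only [List.map_nil, List.prod_nil] using QPM.const 1
  | cons a l ih => simpa only [List.map_cons, List.prod_cons] using (hA a).mul ih

lemma QPM.smul {N : ℕ} {ι : Type} {A : (Idx N → ℂ) → Matrix ι ι ℂ} (hA : QPM N A) (c : ℂ) :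
    QPM N (fun p => c • A p) :=
  fun i j => (QP N).smul_mem (hA i j) c

lemma QPM.auxEmb {N : ℕ} {K : (Idx N → ℂ) → Matrix (Fin 2) (Fin 2) ℂ} (hK : QPM N K) :
    QPM N (fun p => auxEmb N (K p)) :=
  fun i j => (QP N).mul_mem (hK i.1 j.1) (const_mem N _)

lemma QPM.t0 {N : ℕ} {A : (Idx N → ℂ) → AOp N} (hA : QPM N A) : QPM N (fun p => t0 N (A p)) :=
  fun _ _ => hA _ _

lemma QPM.ptr {N : ℕ} {A : (Idx N → ℂ) → AOp N} (hA : QPM N A) :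
    QPM N (fun p => ptr N (A p)) := by
  intro i j
  have : (fun p => SoVT.ptr N (A p) i j) = ∑ a, fun p => A p (a, i) (a, j) := by
    ext p
    simp [SoVT.ptr]
  rw [this]
  exact (QP N).sum_mem fun a _ => hA _ _

lemma QPM.det {N : ℕ} {ι : Type} [Fintype ι] [DecidableEq ι]
    {A : (Idx N → ℂ) → Matrix ι ι ℂ} (hA : QPM N A) : (fun p => (A p).det) ∈ QP N := by
  have : (fun p => (A p).det) = ∑ σ : Equiv.Perm ι,
      (((Equiv.Perm.sign σ : ℤ) : ℂ)) • ∏ i, fun p => A p (σ i) i := by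
    ext p
    simp [Matrix.det_apply']
  rw [this]
  exact (QP N).sum_mem fun σ _ => (QP N).smul_mem ((QP N).prod_mem fun i _ => hA _ _) _

lemma QPM.fin_two {N : ℕ} {a b c d : (Idx N → ℂ) → ℂ} (ha : a ∈ QP N) (hb : b ∈ QP N)
    (hc : c ∈ QP N) (hd : d ∈ QP N) : QPM N (fun p => !![a p, b p; c p, d p]) := by
  intro i j
  fin_cases i <;> fin_cases j
  · exact ha
  · exact hb
  · exact hc
  · exact hd

/-! ### Regularised transfer matrices -/

/-- A `4 × 4` matrix acting on the auxiliary space and site `m` of the chain. -/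
def embSite (N : ℕ) (m : Fin N) (Q : Matrix (Fin 2 × Fin 2) (Fin 2 × Fin 2) ℂ) : AOp N :=
  Matrix.of fun p q => Q (p.1, p.2 m) (q.1, q.2 m) *
      ∏ k ∈ Finset.univ.erase m, (if p.2 k = q.2 k then (1 : ℂ) else 0)

/-- The matrix `P - 1`, with `P` the permutation; `R(-η) = sinh η • (P - 1)`. -/
def qmat : Matrix (Fin 2 × Fin 2) (Fin 2 × Fin 2) ℂ :=
  Matrix.of fun p q =>
    if p = q then (if p.1 = p.2 then 0 else -1)
    else if p.1 = q.2 ∧ p.2 = q.1 then 1 else 0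

lemma Rmat_neg (η : ℂ) : Rmat η (-η) = Complex.sinh η • qmat := by
  ext p q
  simp only [Rmat, qmat, Matrix.of_apply, Matrix.smul_apply, smul_eq_mul]
  split_ifs <;> simp

/-- The boundary matrix without its prefactor `1 / sinh ζ`, in the variable `u = λ - η/2`. -/
def Kt (ζ κ τ u : ℂ) : Matrix (Fin 2) (Fin 2) ℂ :=
  !![Complex.sinh (u + ζ), κ * Complex.exp τ * Complex.sinh (2 * u);
     κ * Complex.exp (-τ) * Complex.sinh (2 * u), Complex.sinh (ζ - u)]

lemma Kmat_eq (η ζ κ τ lam : ℂ) :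
    Kmat η ζ κ τ lam = (Complex.sinh ζ)⁻¹ • Kt ζ κ τ (lam - η / 2) := by
  simp only [Kmat, Kt]
  congr! 5 <;> ring_nf

/-- Factor `m` of the bulk monodromy matrix at `λ = ξ_n - η/2`, with `sinh η` divided out of the
factor `m = n`. -/
def Rfac (N : ℕ) (η : ℂ) (ξ : Fin N → ℂ) (n m : Fin N) : AOp N :=
  if m = n then embSite N m qmat else Rsite N η m (ξ n - ξ m - η)

/-- The bulk monodromy matrix at `λ = ξ_n - η/2` divided by `sinh η`. -/
def monoT (N : ℕ) (η : ℂ) (ξ : Fin N → ℂ) (n : Fin N) : AOp N :=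
  (((List.finRange N).reverse).map fun m => Rfac N η ξ n m).prod

lemma list_prod_smul {ι κ : Type} [Fintype ι] [DecidableEq ι] (l : List κ)
    (c : κ → ℂ) (g : κ → Matrix ι ι ℂ) :
    (l.map fun m => c m • g m).prod = (l.map c).prod • (l.map g).prod := by
  induction l with
  | nil => simp
  | cons a l ih => simp [ih, smul_smul, mul_comm]

lemma mono_eq (N : ℕ) (η : ℂ) (ξ : Fin N → ℂ) (n : Fin N) :
    mono N η ξ (ξ n - η / 2) = Complex.sinh η • monoT N η ξ n := by
  have h : ∀ m, Rsite N η m (ξ n - η / 2 - (ξ m + η / 2)) =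
      (if m = n then Complex.sinh η else 1) • Rfac N η ξ n m := by
    intro m
    have e : ξ n - η / 2 - (ξ m + η / 2) = ξ n - ξ m - η := by ring
    rw [e, Rfac]
    split_ifs with hm
    · subst hm
      rw [sub_self, zero_sub]
      ext p q
      simp [Rsite, embSite, Rmat_neg, mul_assoc]
    · rw [one_smul]
  simp only [mono, monoT, h]
  rw [list_prod_smul, List.map_reverse, List.prod_reverse, ← Fin.prod_univ_def]
  simp

lemma auxEmb_smul (N : ℕ) (c : ℂ) (K : Matrix (Fin 2) (Fin 2) ℂ) :
    auxEmb N (c • K) = c • auxEmb N K := by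
  ext p q
  simp [auxEmb]

lemma ptr_smul (N : ℕ) (c : ℂ) (M : AOp N) : ptr N (c • M) = c • ptr N M := by
  ext p q
  simp [ptr, mul_add]

/-- The transfer matrix at `ξ_n - η/2` multiplied by `sinh ζ₊ sinh ζ₋ / sinh η`; it is
regular, and in general nonzero, at `η = 0`. -/
def Tt (N : ℕ) (η : ℂ) (ξ : Fin N → ℂ) (ζm κm τm ζp κp τp : ℂ) (n : Fin N) : Op N :=
  ptr N (auxEmb N (Kt ζp κp τp (ξ n)) * monoT N η ξ n *
    auxEmb N (Kt ζm κm τm (ξ n - η)) * monoHat N η ξ (ξ n - η / 2))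

lemma T_eq (N : ℕ) (η : ℂ) (ξ : Fin N → ℂ) (ζm κm τm ζp κp τp : ℂ) (n : Fin N) :
    T N η ξ ζm κm τm ζp κp τp (ξ n - η / 2) =
      ((Complex.sinh ζp)⁻¹ * (Complex.sinh ζm)⁻¹ * Complex.sinh η) •
        Tt N η ξ ζm κm τm ζp κp τp n := by
  have e1 : ξ n - η / 2 + η - η / 2 = ξ n := by ring
  have e2 : ξ n - η / 2 - η / 2 = ξ n - η := by ring
  rw [T, Tt, ← ptr_smul, Kmat_eq, Kmat_eq, e1, e2, mono_eq, auxEmb_smul, auxEmb_smul]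
  simp only [smul_mul_assoc, mul_smul_comm, smul_smul]
  congr 2
  ring

/-- The matrix whose row `h` is `S ∏ₙ Ttₙ^{1 - hₙ}`. -/
def covT (N : ℕ) (η : ℂ) (ξ : Fin N → ℂ) (ζm κm τm ζp κp τp : ℂ) (S : HSp N) :
    Matrix (Chain N) (Chain N) ℂ :=
  Matrix.of fun h x => Matrix.vecMul S
    (((List.finRange N).map fun n =>
      Tt N η ξ ζm κm τm ζp κp τp n ^ (1 - (h n : ℕ))).prod) x

lemma sov_det_ne (N : ℕ) (η : ℂ) (ξ : Fin N → ℂ) (ζm κm τm ζp κp τp αm βm αp βp : ℂ)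
    (S : HSp N) (hη : Complex.sinh η ≠ 0) (hp : Complex.sinh ζp ≠ 0) (hm : Complex.sinh ζm ≠ 0)
    (hA : ∀ n, Afun N η ξ ζm κm τm ζp κp τp αm βm αp βp (η / 2 - ξ n) ≠ 0)
    (hd : (covT N η ξ ζm κm τm ζp κp τp S).det ≠ 0) :
    (Matrix.of fun h x : Chain N =>
      sovCov N η ξ ζm κm τm ζp κp τp αm βm αp βp S h x).det ≠ 0 := by
  set c : Fin N → ℂ := fun n =>
    (Afun N η ξ ζm κm τm ζp κp τp αm βm αp βp (η / 2 - ξ n))⁻¹ *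
      ((Complex.sinh ζp)⁻¹ * (Complex.sinh ζm)⁻¹ * Complex.sinh η) with hc
  have hc0 : ∀ n, c n ≠ 0 := fun n => by simp [hc, hη, hp, hm, hA n]
  have key : (Matrix.of fun h x : Chain N =>
      sovCov N η ξ ζm κm τm ζp κp τp αm βm αp βp S h x) =
      Matrix.of fun h x => (∏ n, c n ^ (1 - (h n : ℕ))) *
        covT N η ξ ζm κm τm ζp κp τp S h x := by
    ext h x
    simp only [Matrix.of_apply, sovCov, covT, T_eq, smul_smul, smul_pow]
    rw [list_prod_smul, ← Fin.prod_univ_def, Matrix.vecMul_smul, Pi.smul_apply,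
      smul_eq_mul]
  rw [key, Matrix.det_mul_column]
  exact mul_ne_zero (Finset.prod_ne_zero_iff.2 fun h _ =>
    Finset.prod_ne_zero_iff.2 fun n _ => pow_ne_zero _ (hc0 n)) hd

/-! ### The determinant is a Laurent polynomial -/

lemma QPM.Rsite {N : ℕ} {e l : (Idx N → ℂ) → ℂ} (he : ELin N e) (hl : ELin N l) (m : Fin N) :
    QPM N (fun p => Rsite N (e p) m (l p)) := by
  intro i j
  refine (QP N).mul_mem (x := fun p => Rmat (e p) (l p) (i.1, i.2 m) (j.1, j.2 m)) ?_
    (const_mem N _)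
  simp only [Rmat, Matrix.of_apply]
  split_ifs
  · exact (hl.add he).sinh_mem
  · exact hl.sinh_mem
  · exact he.sinh_mem
  · exact const_mem N 0

lemma QPM.Kt {N : ℕ} {ζ κ τ u : (Idx N → ℂ) → ℂ} (hζ : ELin N ζ) (hκ : κ ∈ QP N)
    (hτ : ELin N τ) (hu : ELin N u) : QPM N (fun p => Kt (ζ p) (κ p) (τ p) (u p)) :=
  QPM.fin_two (hu.add hζ).sinh_mem
    ((QP N).mul_mem ((QP N).mul_mem hκ hτ.1) hu.two.sinh_mem)
    ((QP N).mul_mem ((QP N).mul_mem hκ hτ.2) hu.two.sinh_mem) (hζ.sub hu).sinh_mem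

lemma elin_xi {N : ℕ} (n : Fin N) : ELin N (fun p => p (Sum.inr (Sum.inl n))) :=
  ELin.coord N _ trivial

lemma elin_par {N : ℕ} (i : Fin 7) (hi : i ≠ 3 ∧ i ≠ 4) :
    ELin N (fun p => p (Sum.inr (Sum.inr i))) := ELin.coord N _ hi

lemma kappa_mem {N : ℕ} (i : Fin 7) (hi : ¬ (i ≠ 3 ∧ i ≠ 4)) :
    (fun p => p (Sum.inr (Sum.inr i))) ∈ QP N := coord_mem N _ hi

/-- `covT` at the values of the parameters listed by `p`. -/
def covP (N : ℕ) (p : Idx N → ℂ) : Matrix (Chain N) (Chain N) ℂ :=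
  covT N (p (Sum.inr (Sum.inr 0))) (fun n => p (Sum.inr (Sum.inl n)))
    (p (Sum.inr (Sum.inr 2))) (p (Sum.inr (Sum.inr 4))) (p (Sum.inr (Sum.inr 6)))
    (p (Sum.inr (Sum.inr 1))) (p (Sum.inr (Sum.inr 3))) (p (Sum.inr (Sum.inr 5)))
    (fun x => p (Sum.inl x))

lemma QPM.covP (N : ℕ) : QPM N (covP N) := by
  have hη : ELin N (fun p => p (Sum.inr (Sum.inr 0))) := elin_par 0 (by decide)
  have hT : ∀ n, QPM N (fun p => Tt N (p (Sum.inr (Sum.inr 0))) (fun n => p (Sum.inr (Sum.inl n)))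
    (p (Sum.inr (Sum.inr 2))) (p (Sum.inr (Sum.inr 4))) (p (Sum.inr (Sum.inr 6)))
    (p (Sum.inr (Sum.inr 1))) (p (Sum.inr (Sum.inr 3))) (p (Sum.inr (Sum.inr 5))) n) := by
    intro n
    refine QPM.ptr ((((QPM.auxEmb (QPM.Kt (elin_par 1 (by decide)) (kappa_mem 3 (by decide))
      (elin_par 5 (by decide)) (elin_xi n))).mul ?_).mul
      (QPM.auxEmb (QPM.Kt (elin_par 2 (by decide)) (kappa_mem 4 (by decide))
      (elin_par 6 (by decide)) ((elin_xi n).sub hη)))).mul ?_)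
    · refine QPM.list_prod (fun m => ?_) _
      by_cases hm : m = n
      · simpa only [Rfac, hm, if_true] using QPM.const _
      · simpa only [Rfac, hm, if_false] using
          QPM.Rsite hη (((elin_xi n).sub (elin_xi m)).sub hη) m
    · refine QPM.smul (((QPM.const _).mul (QPM.t0 (QPM.list_prod (fun m => ?_) _))).mul
        (QPM.const _)) _
      have := QPM.Rsite hη ((elin_xi n).neg.sub (elin_xi m)) m
      convert this using 3
      ring
  intro h x
  have hM := QPM.list_prod (fun n => (hT n).pow (1 - (h n : ℕ))) (List.finRange N)
  have : (fun p => SoVT.covP N p h x) = ∑ y, (fun p => p (Sum.inl y)) * (fun p =>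
      (((List.finRange N).map fun n => Tt N (p (Sum.inr (Sum.inr 0)))
        (fun n => p (Sum.inr (Sum.inl n)))
        (p (Sum.inr (Sum.inr 2))) (p (Sum.inr (Sum.inr 4))) (p (Sum.inr (Sum.inr 6)))
        (p (Sum.inr (Sum.inr 1))) (p (Sum.inr (Sum.inr 3))) (p (Sum.inr (Sum.inr 5))) n ^
          (1 - (h n : ℕ))).prod) y x) := by
    ext p
    simp [SoVT.covP, covT, Matrix.vecMul, dotProduct]
  rw [this]
  exact (QP N).sum_mem fun y _ => (QP N).mul_mem (coord_mem N _ id) (hM y x)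

/-! ### Decoupling at `η = 0` -/

/-- The operator `⊗ₖ C k`. -/
def kron (N : ℕ) (C : Fin N → Matrix (Fin 2) (Fin 2) ℂ) : Op N :=
  Matrix.of fun x y => ∏ k, C k (x k) (y k)

lemma kron_one (N : ℕ) : kron N 1 = 1 := by
  ext x y
  simp only [kron, Matrix.of_apply, Pi.one_apply, Matrix.one_apply, Finset.prod_boole,
    funext_iff, Finset.mem_univ, true_imp_iff]

lemma kron_mul (N : ℕ) (C D : Fin N → Matrix (Fin 2) (Fin 2) ℂ) :
    kron N (C * D) = kron N C * kron N D := by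
  ext x y
  simp only [kron, Matrix.of_apply, Matrix.mul_apply, Pi.mul_apply, Fintype.prod_sum,
    Finset.prod_mul_distrib]

/-- The tensor product as a monoid homomorphism. -/
def kronHom (N : ℕ) : (Fin N → Matrix (Fin 2) (Fin 2) ℂ) →* Op N where
  toFun := kron N
  map_one' := kron_one N
  map_mul' := kron_mul N

lemma kron_mulSingle (N : ℕ) (n : Fin N) (B : Matrix (Fin 2) (Fin 2) ℂ) (x y : Chain N) :
    kron N (Pi.mulSingle n B) x y = B (x n) (y n) *
      ∏ k ∈ Finset.univ.erase n, (if x k = y k then (1 : ℂ) else 0) := by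
  rw [kron, Matrix.of_apply, ← Finset.mul_prod_erase _ _ (Finset.mem_univ n), Pi.mulSingle_eq_same]
  congr 1
  refine Finset.prod_congr rfl fun k hk => ?_
  rw [Pi.mulSingle_eq_of_ne (Finset.ne_of_mem_erase hk), Matrix.one_apply]

lemma list_prod_ite {M κ : Type} [Monoid M] [DecidableEq κ] (l : List κ) (n : κ) (Q : M)
    (hl : l.Nodup) (hn : n ∈ l) : (l.map fun m => if m = n then Q else 1).prod = Q := by
  have h : ∀ l : List κ, (l.map fun m => if m = n then Q else 1).prod = Q ^ l.count n := by
    intro l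
    induction l with
    | nil => simp
    | cons a l ih =>
      by_cases ha : a = n
      · simp [ih, ha, pow_succ']
      · simp [ih, ha]
  rw [h, List.count_eq_one_of_mem hl hn, pow_one]

lemma Rsite_zero (N : ℕ) (m : Fin N) (u : ℂ) :
    Rsite N 0 m u = Complex.sinh u • (1 : AOp N) := by
  ext ⟨a, x⟩ ⟨b, y⟩
  simp only [Rsite, Rmat, Matrix.of_apply, Matrix.smul_apply, Matrix.one_apply, smul_eq_mul,
    add_zero, Complex.sinh_zero, ite_self, Finset.prod_boole, Prod.mk.injEq]
  by_cases hab : a = b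
  · by_cases hm : x m = y m
    · have : (∀ i ∈ Finset.univ.erase m, x i = y i) ↔ x = y := by
        refine ⟨fun h => funext fun i => ?_, fun h i _ => congrFun h i⟩
        by_cases hi : i = m
        · rw [hi, hm]
        · exact h i (by simp [hi])
      simp only [this, hab, hm, true_and, if_true]
    · have : x ≠ y := fun h => hm (congrFun h m)
      simp [hm, this]
  · simp [hab]

lemma monoT_zero (N : ℕ) (ξ : Fin N → ℂ) (n : Fin N) :
    monoT N 0 ξ n =
      (∏ m, if m = n then 1 else Complex.sinh (ξ n - ξ m)) • embSite N n qmat := by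
  have h : ∀ m, Rfac N 0 ξ n m = (if m = n then 1 else Complex.sinh (ξ n - ξ m)) •
      (if m = n then embSite N n qmat else 1) := by
    intro m
    by_cases hm : m = n
    · simp [Rfac, hm]
    · simp [Rfac, hm, Rsite_zero]
  simp only [monoT, h]
  rw [list_prod_smul, list_prod_ite _ _ _ (List.nodup_reverse.2 (List.nodup_finRange N))
    (by simp), List.map_reverse, List.prod_reverse, ← Fin.prod_univ_def]

lemma auxEmb_mul_apply (N : ℕ) (K : Matrix (Fin 2) (Fin 2) ℂ) (M : AOp N) (a : Fin 2)
    (x : Chain N) (q : Fin 2 × Chain N) :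
    (auxEmb N K * M) (a, x) q = ∑ b, K a b * M (b, x) q := by
  simp [Matrix.mul_apply, auxEmb, Fintype.sum_prod_type]

lemma mul_auxEmb_apply (N : ℕ) (K : Matrix (Fin 2) (Fin 2) ℂ) (M : AOp N) (a : Fin 2)
    (x : Chain N) (q : Fin 2 × Chain N) :
    (M * auxEmb N K) q (a, x) = ∑ b, M q (b, x) * K b a := by
  simp [Matrix.mul_apply, auxEmb, Fintype.sum_prod_type]

lemma monoHat_zero (N : ℕ) (ξ : Fin N → ℂ) (lam : ℂ) :
    monoHat N 0 ξ lam = ((-1 : ℂ) ^ N * ∏ m, Complex.sinh (-lam - ξ m)) • (1 : AOp N) := by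
  have h1 : mono N 0 ξ (-lam) = (∏ m, Complex.sinh (-lam - ξ m)) • (1 : AOp N) := by
    simp only [mono, Rsite_zero, zero_div, add_zero]
    rw [list_prod_smul, List.map_reverse, List.prod_reverse, ← Fin.prod_univ_def]
    simp
  have h2 : t0 N (1 : AOp N) = 1 := by
    ext p q
    simp only [t0, Matrix.of_apply, Matrix.one_apply, Prod.ext_iff, eq_comm]
  have h3 : ∀ c : ℂ, t0 N (c • (1 : AOp N)) = c • 1 := by
    intro c
    conv_rhs => rw [← h2]
    rfl
  have h4 : auxEmb N sigY * auxEmb N sigY = 1 := by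
    ext ⟨a, x⟩ ⟨b, y⟩
    rw [auxEmb_mul_apply]
    fin_cases a <;> fin_cases b <;> simp [auxEmb, sigY, Matrix.one_apply]
  rw [monoHat, h1, h3, mul_smul_comm, smul_mul_assoc, mul_one, h4, smul_smul]

/-- The one-site operator to which the regularised transfer matrix reduces at `η = 0`. -/
def Bmat (Kp Km : Matrix (Fin 2) (Fin 2) ℂ) : Matrix (Fin 2) (Fin 2) ℂ :=
  Matrix.of fun i j => ∑ a, ∑ c, (∑ b, Kp a b * qmat (b, i) (c, j)) * Km c a

lemma Bmat_01 (Kp Km : Matrix (Fin 2) (Fin 2) ℂ) :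
    Bmat Kp Km 0 1 = Kp 0 1 * Km 0 0 + Kp 1 1 * Km 0 1 := by
  simp [Bmat, qmat]

lemma ptr_embSite (N : ℕ) (n : Fin N) (Kp Km : Matrix (Fin 2) (Fin 2) ℂ) (c : ℂ) :
    c • ptr N (auxEmb N Kp * embSite N n qmat * auxEmb N Km) =
      kron N (Pi.mulSingle n (c • Bmat Kp Km)) := by
  ext x y
  rw [kron_mulSingle]
  simp only [Matrix.smul_apply, ptr, Matrix.of_apply, mul_auxEmb_apply, auxEmb_mul_apply,
    Bmat, embSite, smul_eq_mul, Finset.sum_mul, Finset.mul_sum]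
  refine Finset.sum_congr rfl fun a _ => Finset.sum_congr rfl fun b _ =>
    Finset.sum_congr rfl fun d _ => ?_
  ring

lemma Tt_zero (N : ℕ) (ξ : Fin N → ℂ) (ζm κm τm ζp κp τp : ℂ) (n : Fin N) :
    Tt N 0 ξ ζm κm τm ζp κp τp n = kron N (Pi.mulSingle n
      (((∏ m, if m = n then 1 else Complex.sinh (ξ n - ξ m)) *
        ((-1 : ℂ) ^ N * ∏ m, Complex.sinh (-ξ n - ξ m))) •
        Bmat (Kt ζp κp τp (ξ n)) (Kt ζm κm τm (ξ n)))) := by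
  rw [Tt, monoT_zero, monoHat_zero, ← ptr_embSite, ← ptr_smul]
  simp only [zero_div, sub_zero, mul_smul_comm, smul_mul_assoc, mul_one, smul_smul]
  congr 2
  ring

/-- Covectors obtained from `⟨0,…,0|` by one-site operators `B n` with nonzero off-diagonal entry
form a product basis. -/
lemma det_kron_ne (N : ℕ) (B : Fin N → Matrix (Fin 2) (Fin 2) ℂ) (hB : ∀ n, B n 0 1 ≠ 0) :
    (Matrix.of fun h x : Chain N => Matrix.vecMul (Pi.single 0 1 : HSp N)
      (((List.finRange N).map fun n =>
        kron N (Pi.mulSingle n (B n)) ^ (1 - (h n : ℕ))).prod) x).det ≠ 0 := by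
  let G : Fin N → Matrix (Fin 2) (Fin 2) ℂ := fun n => !![B n 0 0, B n 0 1; 1, 0]
  have key : (Matrix.of fun h x : Chain N => Matrix.vecMul (Pi.single 0 1 : HSp N)
      (((List.finRange N).map fun n =>
        kron N (Pi.mulSingle n (B n)) ^ (1 - (h n : ℕ))).prod) x) = kron N G := by
    ext h x
    have h1 : (((List.finRange N).map fun n =>
        kron N (Pi.mulSingle n (B n)) ^ (1 - (h n : ℕ))).prod) =
        kron N (fun n => B n ^ (1 - (h n : ℕ))) := by
      have h2 : (((List.finRange N).map fun n =>
          (Pi.mulSingle n (B n) : Fin N → Matrix (Fin 2) (Fin 2) ℂ) ^ (1 - (h n : ℕ))).prod) =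
          fun n => B n ^ (1 - (h n : ℕ)) := by
        funext k
        rw [Pi.list_prod_apply, List.map_map]
        refine Eq.trans ?_ (list_prod_ite (List.finRange N) k (B k ^ (1 - (h k : ℕ)))
          (List.nodup_finRange N) (List.mem_finRange k))
        congr 1
        refine List.map_congr_left fun m _ => ?_
        by_cases hm : m = k
        · subst hm
          simp
        · simp [hm]
      rw [← h2]
      change _ = kronHom N _
      rw [map_list_prod, List.map_map]
      congr 1
      refine List.map_congr_left fun m _ => ?_
      exact (map_pow (kronHom N) _ _).symm
    rw [Matrix.of_apply, h1, Matrix.single_one_vecMul]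
    simp only [kron, Matrix.row_apply, Matrix.of_apply]
    refine Finset.prod_congr rfl fun k _ => ?_
    generalize x k = b
    generalize h k = a
    fin_cases a <;> fin_cases b <;> simp [G]
  rw [key]
  have hG : G * (fun n => (G n)⁻¹) = 1 := by
    funext n
    refine Matrix.mul_nonsing_inv _ ?_
    simp [G, Matrix.det_fin_two, hB n]
  have h3 : kron N G * kron N (fun n => (G n)⁻¹) = 1 := by rw [← kron_mul, hG, kron_one]
  intro h0
  have := congrArg Matrix.det h3
  rw [Matrix.det_mul, h0, zero_mul, Matrix.det_one] at this
  exact zero_ne_one this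

lemma sinh_int_ne {k : ℤ} (hk : k ≠ 0) : Complex.sinh (k : ℂ) ≠ 0 := by
  have : (k : ℂ) = ((k : ℝ) : ℂ) := by norm_cast
  rw [this, ← Complex.ofReal_sinh]
  exact_mod_cast Real.sinh_eq_zero.not.2 (by exact_mod_cast hk)

lemma covP_point (N : ℕ) : ∃ p, (covP N p).det ≠ 0 := by
  refine ⟨Sum.elim (Pi.single 0 1) (Sum.elim (fun n => (((n : ℕ) + 1 : ℤ) : ℂ))
    ![0, 0, 0, 0, 1, 0, 0]), ?_⟩
  set ξ : Fin N → ℂ := fun n => (((n : ℕ) + 1 : ℤ) : ℂ) with hξ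
  have key : covP N (Sum.elim (Pi.single 0 1) (Sum.elim ξ ![0, 0, 0, 0, 1, 0, 0])) =
      covT N 0 ξ 0 1 0 0 0 0 (Pi.single 0 1) := rfl
  rw [key, covT]
  simp only [Tt_zero]
  refine det_kron_ne N _ fun n => ?_
  have h1 : ∀ m, Complex.sinh (-ξ n - ξ m) ≠ 0 := fun m => by
    have : -ξ n - ξ m = ((-((n : ℕ) + 1) - ((m : ℕ) + 1) : ℤ) : ℂ) := by simp [hξ]
    rw [this]
    exact sinh_int_ne (by omega)
  have h2 : ∀ m, m ≠ n → Complex.sinh (ξ n - ξ m) ≠ 0 := fun m hm => by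
    have : ξ n - ξ m = ((((n : ℕ) + 1) - ((m : ℕ) + 1) : ℤ) : ℂ) := by simp [hξ]
    rw [this]
    refine sinh_int_ne fun h => hm (Fin.ext (by omega))
  have h3 : Complex.sinh (ξ n) ≠ 0 := sinh_int_ne (by omega)
  have h4 : Complex.sinh (2 * ξ n) ≠ 0 := by
    have : 2 * ξ n = ((2 * ((n : ℕ) + 1) : ℤ) : ℂ) := by simp [hξ]
    rw [this]
    exact sinh_int_ne (by omega)
  rw [Matrix.smul_apply, smul_eq_mul, Bmat_01]
  refine mul_ne_zero (mul_ne_zero (Finset.prod_ne_zero_iff.2 fun m _ => ?_)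
    (mul_ne_zero (by simp) (Finset.prod_ne_zero_iff.2 fun m _ => h1 m))) ?_
  · split_ifs with hm
    · exact one_ne_zero
    · exact h2 m hm
  · simp [Kt, h3, h4]

/-! ### Nonvanishing of the normalisation `A` -/

/-- Every zero in `ξ` of `g±(η/2 - ξ)`, of the factor with `α` or of the one with `β`, satisfies the
same equation in `ζ, κ, ξ` alone, obtained by eliminating `α` and `β` from the constraints. -/
lemma gfun_ne {η ζ κ τ α β sgn ξ : ℂ} (hκ : κ ≠ 0) (hab : abConstraint ζ κ α β)
    (hs : Complex.sinh ζ ≠ 0) (hsgn : sgn = 1 ∨ sgn = -1)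
    (hE : Complex.sinh ζ * Complex.sinh ζ - Complex.sinh ξ * Complex.sinh ξ -
      4 * (κ * κ) * (Complex.sinh ξ * Complex.sinh ξ) * (Complex.cosh ξ * Complex.cosh ξ) ≠ 0) :
    gfun η ζ κ τ α β sgn (η / 2 - ξ) ≠ 0 := by
  obtain ⟨h1, h2⟩ := hab
  have e1 : η / 2 - ξ + α - η / 2 = α - ξ := by ring
  have e2 : η / 2 - ξ - sgn * β - η / 2 = -(ξ + sgn * β) := by ring
  rw [gfun, if_neg hκ, e1, e2, Complex.cosh_neg]
  have hden : Complex.sinh α * Complex.cosh β ≠ 0 := by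
    rw [h1]
    exact div_ne_zero hs (mul_ne_zero two_ne_zero hκ)
  rw [eq_div_iff (mul_ne_zero two_ne_zero hκ)] at h1 h2
  have iα := Complex.cosh_sq α
  have iβ := Complex.cosh_sq β
  have iξ := Complex.cosh_sq ξ
  have iζ := Complex.cosh_sq ζ
  have q1 : Complex.sinh ζ ^ 2 = 4 * κ ^ 2 * Complex.sinh α ^ 2 * Complex.cosh β ^ 2 := by
    rw [← h1]; ring
  have q2 : Complex.cosh ζ ^ 2 = 4 * κ ^ 2 * Complex.cosh α ^ 2 * Complex.sinh β ^ 2 := by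
    rw [← h2]; ring
  refine div_ne_zero (mul_ne_zero (fun h => hE ?_) (fun h => hE ?_)) hden
  · rw [Complex.sinh_sub, sub_eq_zero] at h
    have a1 : Complex.sinh α ^ 2 = Complex.sinh ξ ^ 2 := by
      have := congrArg (· ^ 2) h
      simp only [mul_pow] at this
      rw [iα, iξ] at this
      linear_combination this
    rw [q1, q2, iα, iβ, a1] at iζ
    have : Complex.sinh ζ ^ 2 = Complex.sinh ξ ^ 2 * (4 * κ ^ 2 * Complex.cosh ξ ^ 2 + 1) := by
      rw [q1, a1, iβ, iξ]
      linear_combination (Complex.sinh ξ ^ 2) * iζ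
    linear_combination this
  · have a0 : Complex.cosh ξ ^ 2 * Complex.cosh β ^ 2 =
        Complex.sinh ξ ^ 2 * Complex.sinh β ^ 2 := by
      rcases hsgn with rfl | rfl
      · rw [one_mul, Complex.cosh_add] at h
        linear_combination (Complex.cosh ξ * Complex.cosh β - Complex.sinh ξ * Complex.sinh β) * h
      · rw [neg_one_mul, ← sub_eq_add_neg, Complex.cosh_sub] at h
        linear_combination (Complex.cosh ξ * Complex.cosh β + Complex.sinh ξ * Complex.sinh β) * h
    have a1 : Complex.cosh β ^ 2 = - Complex.sinh ξ ^ 2 := by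
      rw [iξ] at a0
      linear_combination a0 - Complex.sinh ξ ^ 2 * iβ
    have a2 : Complex.sinh β ^ 2 = - Complex.sinh ξ ^ 2 - 1 := by
      linear_combination a1 - iβ
    rw [q1, q2, iα, a1, a2] at iζ
    have : Complex.sinh ζ ^ 2 = Complex.sinh ξ ^ 2 * (4 * κ ^ 2 * Complex.cosh ξ ^ 2 + 1) := by
      rw [q1, a1, iξ]
      linear_combination (Complex.sinh ξ ^ 2) * iζ
    linear_combination this

/-- The expression whose nonvanishing is required in `gfun_ne`. -/
def Econd (ζ κ ξ : ℂ) : ℂ :=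
  Complex.sinh ζ * Complex.sinh ζ - Complex.sinh ξ * Complex.sinh ξ -
      4 * (κ * κ) * (Complex.sinh ξ * Complex.sinh ξ) * (Complex.cosh ξ * Complex.cosh ξ)

/-- The product of the genericity conditions other than the nonvanishing of the determinant. -/
def Fcond (N : ℕ) (η : ℂ) (ξ : Fin N → ℂ) (ζm κm ζp κp : ℂ) : ℂ :=
  Complex.sinh η * Complex.sinh ζp * Complex.sinh ζm * κp * κm *
    ∏ n, (Complex.sinh (2 * η - 2 * ξ n) * Complex.sinh (η - 2 * ξ n) *
      Econd ζp κp (ξ n) * Econd ζm κm (ξ n) *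
      ∏ m, (Complex.sinh (η - ξ n - ξ m) * Complex.sinh (ξ n - ξ m - η)))

lemma Afun_ne (N : ℕ) (η : ℂ) (ξ : Fin N → ℂ) (ζm κm τm ζp κp τp αm βm αp βp : ℂ)
    (hm : κm ≠ 0 → abConstraint ζm κm αm βm) (hp : κp ≠ 0 → abConstraint ζp κp αp βp)
    (hF : Fcond N η ξ ζm κm ζp κp ≠ 0) (n : Fin N) :
    Afun N η ξ ζm κm τm ζp κp τp αm βm αp βp (η / 2 - ξ n) ≠ 0 := by
  simp only [Fcond, mul_ne_zero_iff, Finset.prod_ne_zero_iff, Finset.mem_univ,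
    true_imp_iff] at hF
  obtain ⟨⟨⟨⟨⟨_, hsp⟩, hsm⟩, hkp⟩, hkm⟩, hn⟩ := hF
  obtain ⟨⟨⟨⟨n1, n2⟩, n3⟩, n4⟩, n5⟩ := hn n
  have e1 : 2 * (η / 2 - ξ n) + η = 2 * η - 2 * ξ n := by ring
  have e2 : 2 * (η / 2 - ξ n) = η - 2 * ξ n := by ring
  simp only [Afun, dPol, aPol]
  refine mul_ne_zero (mul_ne_zero (mul_ne_zero (mul_ne_zero (mul_ne_zero (by simp)
    (div_ne_zero ?_ ?_)) ?_) ?_) ?_) ?_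
  · rwa [e1]
  · rwa [e2]
  · exact gfun_ne hkp (hp hkp) hsp (Or.inl rfl) n3
  · exact gfun_ne hkm (hm hkm) hsm (Or.inr rfl) n4
  · refine Finset.prod_ne_zero_iff.2 fun m _ => ?_
    have : η / 2 - ξ n - ξ m + η / 2 = η - ξ n - ξ m := by ring
    rw [this]
    exact (n5 m).1
  · refine Finset.prod_ne_zero_iff.2 fun m _ => ?_
    have : -(η / 2 - ξ n) - η - ξ m + η / 2 = ξ n - ξ m - η := by ring
    rw [this]
    exact (n5 m).2

/-- `Fcond` at the values of the parameters listed by `p`. -/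
def FcondP (N : ℕ) (p : Idx N → ℂ) : ℂ :=
  Fcond N (p (Sum.inr (Sum.inr 0))) (fun n => p (Sum.inr (Sum.inl n)))
    (p (Sum.inr (Sum.inr 2))) (p (Sum.inr (Sum.inr 4)))
    (p (Sum.inr (Sum.inr 1))) (p (Sum.inr (Sum.inr 3)))

lemma Econd_mem {N : ℕ} {ζ κ ξ : (Idx N → ℂ) → ℂ} (hζ : ELin N ζ) (hκ : κ ∈ QP N)
    (hξ : ELin N ξ) : (fun p => Econd (ζ p) (κ p) (ξ p)) ∈ QP N := by
  have hss := (QP N).mul_mem hξ.sinh_mem hξ.sinh_mem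
  exact (QP N).sub_mem ((QP N).sub_mem ((QP N).mul_mem hζ.sinh_mem hζ.sinh_mem) hss)
    ((QP N).mul_mem ((QP N).mul_mem ((QP N).mul_mem (const_mem N 4) ((QP N).mul_mem hκ hκ)) hss)
      ((QP N).mul_mem hξ.cosh_mem hξ.cosh_mem))

lemma fun_prod_mem {N : ℕ} {ι : Type} (s : Finset ι) {f : ι → (Idx N → ℂ) → ℂ}
    (hf : ∀ i, f i ∈ QP N) : (fun p => ∏ i ∈ s, f i p) ∈ QP N := by
  have : (fun p => ∏ i ∈ s, f i p) = ∏ i ∈ s, f i := by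
    ext p
    simp
  rw [this]
  exact (QP N).prod_mem fun i _ => hf i

lemma FcondP_mem (N : ℕ) : FcondP N ∈ QP N := by
  have hη : ELin N (fun p => p (Sum.inr (Sum.inr 0))) := elin_par 0 (by decide)
  have hp : ELin N (fun p => p (Sum.inr (Sum.inr 1))) := elin_par 1 (by decide)
  have hm : ELin N (fun p => p (Sum.inr (Sum.inr 2))) := elin_par 2 (by decide)
  have kp : (fun p : Idx N → ℂ => p (Sum.inr (Sum.inr 3))) ∈ QP N := kappa_mem 3 (by decide)
  have km : (fun p : Idx N → ℂ => p (Sum.inr (Sum.inr 4))) ∈ QP N := kappa_mem 4 (by decide)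
  refine (QP N).mul_mem ((QP N).mul_mem ((QP N).mul_mem ((QP N).mul_mem ((QP N).mul_mem
    hη.sinh_mem hp.sinh_mem) hm.sinh_mem) kp) km) (fun_prod_mem _ fun n => ?_)
  have hn := elin_xi n
  exact (QP N).mul_mem ((QP N).mul_mem ((QP N).mul_mem ((QP N).mul_mem
    (hη.two.sub hn.two).sinh_mem (hη.sub hn.two).sinh_mem) (Econd_mem hp kp hn))
    (Econd_mem hm km hn)) (fun_prod_mem _ fun m =>
      (QP N).mul_mem ((hη.sub hn).sub (elin_xi m)).sinh_mem
        ((hn.sub (elin_xi m)).sub hη).sinh_mem)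

lemma FcondP_point (N : ℕ) : ∃ p, FcondP N p ≠ 0 := by
  refine ⟨Sum.elim 0 (Sum.elim 0 ![1, 1, 1, 1, 1, 0, 0]), ?_⟩
  have key : FcondP N (Sum.elim 0 (Sum.elim 0 ![1, 1, 1, 1, 1, 0, 0])) =
      Fcond N 1 0 1 1 1 1 := rfl
  have h1 : Complex.sinh 1 ≠ 0 := by simpa using sinh_int_ne (k := 1) (by norm_num)
  have h2 : Complex.sinh 2 ≠ 0 := by simpa using sinh_int_ne (k := 2) (by norm_num)
  rw [key]
  simp [Fcond, Econd, h1, h2]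

/-- For arbitrary boundary matrices K₋, K₊, the SoV covectors
⟨h₁,…,h_N| form a basis of H* for almost any choice of ⟨S|, of the inhomogeneities
satisfying the inhomogeneity condition mod iπ, of η and of the boundary parameters —
i.e. outside the zero locus of a nonzero polynomial in the variables
e^{2ξₙ}, e^{2η}, e^{2ζ±}, κ±, e^{2τ±} and the components of ⟨S|. -/
theorem statement_6 (N : ℕ) (hN : 1 ≤ N) :
    ∃ Pol : MvPolynomial ((Chain N) ⊕ (Fin N) ⊕ (Fin 7)) ℂ, Pol ≠ 0 ∧
      ∀ (S : HSp N) (ξ : Fin N → ℂ) (η ζm ζp κm κp τm τp αm βm αp βp : ℂ),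
        inhomogT N η ξ →
        (κm ≠ 0 → abConstraint ζm κm αm βm) →
        (κp ≠ 0 → abConstraint ζp κp αp βp) →
        MvPolynomial.eval
          (Sum.elim S (Sum.elim (fun n => Complex.exp (2 * ξ n))
            ![Complex.exp (2 * η), Complex.exp (2 * ζp), Complex.exp (2 * ζm),
              κp, κm, Complex.exp (2 * τp), Complex.exp (2 * τm)])) Pol ≠ 0 →
        (Matrix.of fun h x : Chain N =>
          sovCov N η ξ ζm κm τm ζp κp τp αm βm αp βp S h x).det ≠ 0 := by
  obtain ⟨Q, hQ, h⟩ := generic_of_QP N (FcondP_mem N) (QPM.covP N).det (FcondP_point N)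
    (covP_point N)
  refine ⟨Q, hQ, fun S ξ η ζm ζp κm κp τm τp αm βm αp βp _ hm hp hne => ?_⟩
  let p : Idx N → ℂ := Sum.elim S (Sum.elim ξ ![η, ζp, ζm, κp, κm, τp, τm])
  have hy : (Sum.elim S (Sum.elim (fun n => Complex.exp (2 * ξ n))
      ![Complex.exp (2 * η), Complex.exp (2 * ζp), Complex.exp (2 * ζm),
        κp, κm, Complex.exp (2 * τp), Complex.exp (2 * τm)])) =
      fun i => yv N p i ^ sqExp N i := by
    have e2 : ∀ z : ℂ, Complex.exp (2 * z) = Complex.exp z ^ 2 := fun z => by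
      rw [← Complex.exp_nat_mul]
      norm_num
    funext i
    rcases i with x | n | i
    · simp [yv, sqExp, isExp, p]
    · simp [yv, sqExp, isExp, p, e2]
    · fin_cases i <;> simp [yv, sqExp, isExp, p, e2]
  rw [hy] at hne
  obtain ⟨hF, hd⟩ := h p hne
  have hF' : Fcond N η ξ ζm κm ζp κp ≠ 0 := hF
  have hF2 := hF'
  simp only [Fcond, mul_ne_zero_iff] at hF2
  obtain ⟨⟨⟨⟨⟨hη, hsp⟩, hsm⟩, _⟩, _⟩, _⟩ := hF2
  exact sov_det_ne N η ξ ζm κm τm ζp κp τp αm βm αp βp S hη hsp hsm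
    (Afun_ne N η ξ ζm κm τm ζp κp τp αm βm αp βp hm hp hF') hd

end SoVT
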